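/- Let A ∈ B(H) be a class A operator on a complex Hilbert space H, and let M be a closed subspace of H invariant under A. Then the restriction of A to M, regarded as a bounded operator on the Hilbert space M, is a class A operator. -/

import Mathlib

open ContinuousLinearMap Filter

set_option synthInstance.maxHeartbeats 400000

/-- The `p`-th power of an operator (intended for positive operators), via the
continuous functional calculus. -/
noncomputable def opRpow {H : Type*} [NormedAddCommGroup H] [InnerProductSpace ℂ H]
    [CompleteSpace H] (A : H →L[ℂ] H) (p : ℝ) : H →L[ℂ] H :=
  cfc (fun x : ℝ => x ^ p) A

/-- The logarithm of an operator (intended for positive invertible operators), via the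
continuous functional calculus. -/
noncomputable def opLog {H : Type*} [NormedAddCommGroup H] [InnerProductSpace ℂ H]
    [CompleteSpace H] (A : H →L[ℂ] H) : H →L[ℂ] H :=
  cfc Real.log A

/-- `|A| = (A*A)^{1/2}`, via the continuous functional calculus. -/
noncomputable def opAbs {H : Type*} [NormedAddCommGroup H] [InnerProductSpace ℂ H]
    [CompleteSpace H] (A : H →L[ℂ] H) : H →L[ℂ] H :=
  cfc (fun x : ℝ => Real.sqrt x) (adjoint A * A)

/-- `A` is hyponormal: `A*A ≥ AA*`. -/
def Hyponormal {H : Type*} [NormedAddCommGroup H] [InnerProductSpace ℂ H]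
    [CompleteSpace H] (A : H →L[ℂ] H) : Prop :=
  A * adjoint A ≤ adjoint A * A

/-- `A` is `p`-hyponormal: `(A*A)^p ≥ (AA*)^p`. -/
def PHyponormal {H : Type*} [NormedAddCommGroup H] [InnerProductSpace ℂ H]
    [CompleteSpace H] (A : H →L[ℂ] H) (p : ℝ) : Prop :=
  opRpow (A * adjoint A) p ≤ opRpow (adjoint A * A) p

/-- `A` is `(p,k)`-quasihyponormal: `A*^k ((A*A)^p − (AA*)^p) A^k ≥ 0`. -/
def PKQuasihyponormal {H : Type*} [NormedAddCommGroup H] [InnerProductSpace ℂ H]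
    [CompleteSpace H] (A : H →L[ℂ] H) (p : ℝ) (k : ℕ) : Prop :=
  0 ≤ (adjoint A) ^ k * (opRpow (adjoint A * A) p - opRpow (A * adjoint A) p) * A ^ k

/-- `A` is log-hyponormal: `A` invertible and `log(A*A) ≥ log(AA*)`. -/
def LogHyponormal {H : Type*} [NormedAddCommGroup H] [InnerProductSpace ℂ H]
    [CompleteSpace H] (A : H →L[ℂ] H) : Prop :=
  IsUnit A ∧ opLog (A * adjoint A) ≤ opLog (adjoint A * A)

/-- `A` is a class A operator: `|A²| ≥ |A|²`. -/
def ClassA {H : Type*} [NormedAddCommGroup H] [InnerProductSpace ℂ H]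
    [CompleteSpace H] (A : H →L[ℂ] H) : Prop :=
  opAbs A ^ 2 ≤ opAbs (A ^ 2)

/-- `A` is paranormal: `‖Ax‖² ≤ ‖A²x‖ ‖x‖` for all `x`. -/
def Paranormal {H : Type*} [NormedAddCommGroup H] [InnerProductSpace ℂ H]
    (A : H →L[ℂ] H) : Prop :=
  ∀ x : H, ‖A x‖ ^ 2 ≤ ‖A (A x)‖ * ‖x‖

/-- `A` is normaloid: its norm equals its spectral radius. -/
def Normaloid {H : Type*} [NormedAddCommGroup H] [InnerProductSpace ℂ H]
    (A : H →L[ℂ] H) : Prop :=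
  spectralRadius ℂ A = ‖A‖₊

/-- `T` has Bishop's property (β): whenever `(T - z) fₙ(z) → 0` uniformly on compact subsets
of an open set `D ⊆ ℂ`, for analytic `H`-valued functions `fₙ` on `D`, also `fₙ → 0`
uniformly on compact subsets of `D`. -/
def HasBishopBeta {H : Type*} [NormedAddCommGroup H] [InnerProductSpace ℂ H]
    (T : H →L[ℂ] H) : Prop :=
  ∀ D : Set ℂ, IsOpen D → ∀ f : ℕ → ℂ → H,
    (∀ n, AnalyticOnNhd ℂ (f n) D) →
    (∀ K : Set ℂ, K ⊆ D → IsCompact K →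
      TendstoUniformlyOn (fun n z => T (f n z) - z • f n z) 0 atTop K) →
    ∀ K : Set ℂ, K ⊆ D → IsCompact K →
      TendstoUniformlyOn (fun n z => f n z) 0 atTop K

/-- `T` has the single valued extension property: there is no nonzero analytic `H`-valued
function `f` on a nonempty open `D ⊆ ℂ` with `(T - z) f(z) ≡ 0` on `D`. -/
def HasSVEP {H : Type*} [NormedAddCommGroup H] [InnerProductSpace ℂ H]
    (T : H →L[ℂ] H) : Prop :=
  ∀ D : Set ℂ, IsOpen D → D.Nonempty → ∀ f : ℂ → H,
    AnalyticOnNhd ℂ f D → (∀ z ∈ D, T (f z) - z • f z = 0) →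
    ∀ z ∈ D, f z = 0

/-- The restriction of `A` to an invariant subspace `M`, as an operator on `M`. -/
noncomputable def restrictOp {H : Type*} [NormedAddCommGroup H] [InnerProductSpace ℂ H]
    (A : H →L[ℂ] H) (M : Submodule ℂ H) (h : ∀ x ∈ M, A x ∈ M) : M →L[ℂ] M :=
  (A.comp M.subtypeL).codRestrict M (fun x => h x x.2)


lemma opAbs_eq_sqrt {H : Type*} [NormedAddCommGroup H] [InnerProductSpace ℂ H]
    [CompleteSpace H] (A : H →L[ℂ] H) : opAbs A = CFC.sqrt (adjoint A * A) := by
  have h : 0 ≤ adjoint A * A := star_mul_self_nonneg A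
  rw [CFC.sqrt_eq_real_sqrt _ h, cfcₙ_eq_cfc]
  rfl

lemma opAbs_nonneg {H : Type*} [NormedAddCommGroup H] [InnerProductSpace ℂ H]
    [CompleteSpace H] (A : H →L[ℂ] H) : 0 ≤ opAbs A := by
  rw [opAbs_eq_sqrt]; exact CFC.sqrt_nonneg _

lemma opAbs_sq {H : Type*} [NormedAddCommGroup H] [InnerProductSpace ℂ H]
    [CompleteSpace H] (A : H →L[ℂ] H) : opAbs A ^ 2 = adjoint A * A := by
  have h : 0 ≤ adjoint A * A := star_mul_self_nonneg A
  rw [opAbs_eq_sqrt, CFC.sq_sqrt _ h]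

lemma inner_adj_mul_self {H : Type*} [NormedAddCommGroup H] [InnerProductSpace ℂ H]
    [CompleteSpace H] (T : H →L[ℂ] H) (x : H) :
    inner ℂ ((adjoint T * T : H →L[ℂ] H) x) x = inner ℂ (T x) (T x) :=
  adjoint_inner_left T x (T x)

set_option maxHeartbeats 1000000 in
lemma classA_restrict_aux {H K : Type*} [NormedAddCommGroup H]
    [InnerProductSpace ℂ H] [CompleteSpace H] [NormedAddCommGroup K]
    [InnerProductSpace ℂ K] [CompleteSpace K]
    (A : H →L[ℂ] H) (hA : ClassA A) (B : K →L[ℂ] K) (V : K →L[ℂ] H)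
    (hV : ∀ x, ‖V x‖ = ‖x‖) (hB : ∀ x, V (B x) = A (V x)) : ClassA B := by
  have hin : ∀ x y, inner ℂ (V x) (V y) = inner ℂ x y := fun x y =>
    (LinearMap.norm_map_iff_inner_map_map V).1 hV x y
  have hVn : ∀ y, ‖adjoint V y‖ ≤ ‖y‖ := by
    intro y
    have h1 : ‖adjoint V‖ ≤ 1 := by
      rw [LinearIsometryEquiv.norm_map]
      exact V.opNorm_le_bound zero_le_one (fun x => by simp [hV])
    simpa using (adjoint V).le_of_opNorm_le h1 y
  unfold ClassA at *
  rw [opAbs_sq] at *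
  set S := opAbs (A ^ 2) with hS
  have hSpos : S.IsPositive := (nonneg_iff_isPositive _).1 (opAbs_nonneg _)
  have hSS : S ^ 2 = adjoint (A ^ 2) * (A ^ 2) := opAbs_sq _
  clear_value S
  set Q : K →L[ℂ] K := (adjoint V).comp (S.comp V) with hQ
  have hQpos : Q.IsPositive := hSpos.adjoint_conj V
  have h1 : adjoint B * B ≤ Q := by
    have h := ((ContinuousLinearMap.le_def _ _).1 hA).adjoint_conj V
    rw [ContinuousLinearMap.le_def]
    convert h using 1
    ext x
    refine ext_inner_right ℂ fun y => ?_
    simp [hQ, inner_sub_left, adjoint_inner_left, ← hB, hin]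
  have h2 : Q ≤ opAbs (B ^ 2) := by
    rw [opAbs_eq_sqrt]
    have hQ0 : 0 ≤ Q := (nonneg_iff_isPositive _).2 hQpos
    rw [← CFC.sqrt_mul_self Q hQ0]
    apply CFC.sqrt_le_sqrt
    rw [ContinuousLinearMap.le_def, isPositive_def']
    constructor
    · exact (IsSelfAdjoint.star_mul_self (B ^ 2)).sub (by
        have := hQpos.isSelfAdjoint
        rw [← pow_two]; exact this.pow 2)
    · intro x
      have e1 : inner ℂ ((adjoint (B ^ 2) * B ^ 2 : K →L[ℂ] K) x) x = inner ℂ (S (V x)) (S (V x)) := by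
        have : inner ℂ (S (V x)) (S (V x)) = inner ℂ ((S ^ 2) (V x)) (V x) := by
          rw [pow_two]
          exact (hSpos.inner_left_eq_inner_right (S (V x)) (V x)).symm
        rw [this, hSS, inner_adj_mul_self, inner_adj_mul_self]
        rw [← hin]
        simp [pow_two, hB]
      have e2 : inner ℂ ((Q * Q) x) x = inner ℂ (Q x) (Q x) :=
        hQpos.inner_left_eq_inner_right (Q x) x
      rw [reApplyInnerSelf_apply, sub_apply, inner_sub_left, e1, e2, map_sub,
        inner_self_eq_norm_sq, inner_self_eq_norm_sq, sub_nonneg]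
      exact pow_le_pow_left₀ (norm_nonneg _) (hVn (S (V x))) 2
  exact h1.trans h2

theorem classA_restrict {H : Type*} [NormedAddCommGroup H]
    [InnerProductSpace ℂ H] [CompleteSpace H]
    (A : H →L[ℂ] H) (hA : ClassA A)
    (M : Submodule ℂ H) (hMc : IsClosed (M : Set H)) (hInv : ∀ x ∈ M, A x ∈ M) :
    haveI : CompleteSpace M := hMc.completeSpace_coe
    ClassA (restrictOp A M hInv) := by
  haveI : CompleteSpace M := hMc.completeSpace_coe
  exact classA_restrict_aux A hA (restrictOp A M hInv) M.subtypeL (fun x => rfl) (fun x => rfl)
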